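/- For the family 𝔤₁₇(α, a, w₁, w₂) with α ≠ 0 and a ≠ 0, the structure J is integrable, i.e. the Nijenhuis tensor N(E,F) = 0 for all E, F ∈ 𝔤, if and only if w₁ = 0 and w₂ = 0. In particular, the pair of conditions (α² − a²)w₁ = 2aα w₂ and (α² − a²)w₂ = −2aα w₁ forces w₁ = w₂ = 0. -/

import Mathlib

noncomputable section

/-- The bilinear antisymmetric bracket on ℝ⁴ determined by the structure constants. -/
def bk (α a w₁ w₂ : ℝ) (E F : Fin 4 → ℝ) : Fin 4 → ℝ :=
  (E 0 * F 1 - E 1 * F 0) • (![0, 0, 0, 0] : Fin 4 → ℝ) +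
  (E 0 * F 2 - E 2 * F 0) • (![-α, 0, a * w₁ / α, -w₁] : Fin 4 → ℝ) +
  (E 0 * F 3 - E 3 * F 0) • (![-a, 0, a ^ 2 * w₁ / α ^ 2, -(a * w₁ / α)] : Fin 4 → ℝ) +
  (E 1 * F 2 - E 2 * F 1) • (![0, -α, a * w₂ / α, -w₂] : Fin 4 → ℝ) +
  (E 1 * F 3 - E 3 * F 1) • (![0, -a, a ^ 2 * w₂ / α ^ 2, -(a * w₂ / α)] : Fin 4 → ℝ) +
  (E 2 * F 3 - E 3 * F 2) • (![0, 0, 0, 0] : Fin 4 → ℝ)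

/-- The almost Hermitian structure J with J(X)=Y, J(Y)=-X, J(Z)=W, J(W)=-Z. -/
def Jm (E : Fin 4 → ℝ) : Fin 4 → ℝ := ![-E 1, E 0, -E 3, E 2]

/-- The Nijenhuis tensor of J. -/
def NT (α a w₁ w₂ : ℝ) (E F : Fin 4 → ℝ) : Fin 4 → ℝ :=
  bk α a w₁ w₂ E F + Jm (bk α a w₁ w₂ (Jm E) F) + Jm (bk α a w₁ w₂ E (Jm F)) -
    bk α a w₁ w₂ (Jm E) (Jm F)

theorem g17_integrable_iff (α a w₁ w₂ : ℝ) (hα : α ≠ 0) (ha : a ≠ 0) :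
    ((∀ E F : Fin 4 → ℝ, NT α a w₁ w₂ E F = 0) ↔ (w₁ = 0 ∧ w₂ = 0)) ∧
    (((α ^ 2 - a ^ 2) * w₁ = 2 * a * α * w₂ ∧
        (α ^ 2 - a ^ 2) * w₂ = -(2 * a * α * w₁)) →
      w₁ = 0 ∧ w₂ = 0) := by
  have key : ((α ^ 2 - a ^ 2) * w₁ = 2 * a * α * w₂ ∧
        (α ^ 2 - a ^ 2) * w₂ = -(2 * a * α * w₁)) → w₁ = 0 ∧ w₂ = 0 := by
    rintro ⟨h1, h2⟩
    have hp : (α ^ 2 + a ^ 2) ^ 2 ≠ 0 := by positivity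
    constructor
    · apply (mul_eq_zero.mp _).resolve_left hp
      linear_combination (α ^ 2 - a ^ 2) * h1 + 2 * a * α * h2
    · apply (mul_eq_zero.mp _).resolve_left hp
      linear_combination (α ^ 2 - a ^ 2) * h2 - 2 * a * α * h1
  refine ⟨⟨fun h => key ?_, ?_⟩, key⟩
  · have h0 := h ![1, 0, 0, 0] ![0, 0, 1, 0]
    have h2 := congrFun h0 2
    have h3 := congrFun h0 3
    simp [NT, bk, Jm] at h2 h3
    field_simp at h2 h3
    constructor
    · linear_combination -h3
    · linear_combination h2
  · rintro ⟨rfl, rfl⟩ E F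
    ext i
    fin_cases i <;> simp [NT, bk, Jm] <;> ring


end
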